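/- arXiv:2303.04085 — 3 statements merged into one kernel-verified Lean document; each statement's English description precedes it below -/
import Mathlib

section
/- With the construction in the context (in particular 1_G ∈ S and S ≠ S⁻¹), assume n > 3. Then every maximal clique of the graph X̂ is, for some x ∈ Ĝ, one of the following sets of vertices: (a) the coset Gx; (b) Ax ∪ Abx; or (c) a subset of Gx ∪ Gbx that does not contain any coset of G. -/
/-!
Adjacent vertices of the graph differ by at most one step `b` in the `B`-coordinate, and they share
their `A`-coordinate or their `G`-coordinate. Since `b` has order at least `4`, three distinct layers
are never pairwise within one step of each other, so a clique lies in two consecutive layers `k`, `bk`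
(`exists_two_layers`). Moreover pairwise collinear points of the grid `G × A` all lie on one line,
so a clique has a constant `A`-coordinate or a constant `G`-coordinate (`common_coordinate`).

With a constant `G`-coordinate the clique lies in `Ax ∪ Abx`, which is itself a clique, so maximality
gives equality. With a constant `A`-coordinate it lies in `Gx ∪ Gbx`. If it contains a coset `Gy` and
a further vertex `z`, then `z` is in a neighbouring layer and adjacent to all of `Gy`; this forces
`S = G`, contradicting `S ≠ S⁻¹` (`eq_coset_of_subset`).
-/

open scoped Pointwise

/-- Edge relation of the Cayley digraph `Cay⃗(G;S)`: there is a directed edge from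
`g` to `h` iff `h ∈ Sg`, i.e. iff `h * g⁻¹ ∈ S`. -/
def cayleyRel {G : Type*} [Group G] (S : Set G) : G → G → Prop :=
  fun g h => h * g⁻¹ ∈ S

section Construction

variable {G A B : Type*} [Group G] [Group A] [Group B]

/-- The subgroup `G` of `Ĝ = G × A × B` (as a subset). -/
def Gset (G A B : Type*) [Group G] [Group A] [Group B] : Set (G × A × B) :=
  {z | z.2.1 = 1 ∧ z.2.2 = 1}

/-- The subgroup `A` of `Ĝ = G × A × B` (as a subset). -/
def Aset (G A B : Type*) [Group G] [Group A] [Group B] : Set (G × A × B) :=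
  {z | z.1 = 1 ∧ z.2.2 = 1}

/-- The coset `Ab` in `Ĝ = G × A × B` (as a subset). -/
def Abset (G A : Type*) {B : Type*} [Group G] [Group A] [Group B] (b : B) :
    Set (G × A × B) :=
  {z | z.1 = 1 ∧ z.2.2 = b}

/-- The coset `Gb` in `Ĝ = G × A × B` (as a subset). -/
def Gbset (G A : Type*) {B : Type*} [Group G] [Group A] [Group B] (b : B) :
    Set (G × A × B) :=
  {z | z.2.1 = 1 ∧ z.2.2 = b}

/-- The coset `Sb` in `Ĝ = G × A × B` (as a subset), for `S ⊆ G`. -/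
def Sbset (A : Type*) {G B : Type*} [Group G] [Group A] [Group B]
    (S : Set G) (b : B) : Set (G × A × B) :=
  {z | z.1 ∈ S ∧ z.2.1 = 1 ∧ z.2.2 = b}

/-- The subgroup `AB` of `Ĝ = G × A × B` (as a subset). -/
def ABset (G A B : Type*) [Group G] [Group A] [Group B] : Set (G × A × B) :=
  {z | z.1 = 1}

/-- The subgroup `GB` of `Ĝ = G × A × B` (as a subset). -/
def GBset (G A B : Type*) [Group G] [Group A] [Group B] : Set (G × A × B) :=
  {z | z.2.1 = 1}

/-- The connection set `Ŝ = G ∪ Sb ∪ A ∪ Ab` of `Ĝ = G × A × B`. -/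
def Shat {G A B : Type*} [Group G] [Group A] [Group B] (S : Set G) (b : B) :
    Set (G × A × B) :=
  Gset G A B ∪ Sbset A S b ∪ Aset G A B ∪ Abset G A b

/-- The (symmetric) adjacency relation of the Cayley graph
`X̂ = Cay(Ĝ; Ŝ ∪ Ŝ⁻¹)`, where `Ĝ = G × A × B`. -/
def hatAdj {G A B : Type*} [Group G] [Group A] [Group B] (S : Set G) (b : B) :
    G × A × B → G × A × B → Prop :=
  fun x y => y * x⁻¹ ∈ Shat S b ∪ (Shat S b)⁻¹

end Construction

/-- A clique of a graph: a set of pairwise adjacent vertices. -/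
def IsClique {V : Type*} (adj : V → V → Prop) (C : Set V) : Prop :=
  ∀ x ∈ C, ∀ y ∈ C, x ≠ y → adj x y

/-- A maximal clique of a graph: a clique not properly contained in any clique. -/
def IsMaxClique {V : Type*} (adj : V → V → Prop) (C : Set V) : Prop :=
  IsClique adj C ∧ ∀ D : Set V, IsClique adj D → C ⊆ D → D = C

section CliqueLemmas

variable {G A B : Type*} [Group G] [Group A] [Group B]

/-- Adjacency in `X̂` in coordinates. -/
lemma hatAdj_iff (S : Set G) (b : B) (x y : G × A × B) :
    hatAdj S b x y ↔
      (y.2.1 = x.2.1 ∧ (y.2.2 = x.2.2 ∨ (y.1 * x.1⁻¹ ∈ S ∧ y.2.2 = b * x.2.2) ∨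
        (x.1 * y.1⁻¹ ∈ S ∧ x.2.2 = b * y.2.2))) ∨
      (y.1 = x.1 ∧ (y.2.2 = x.2.2 ∨ y.2.2 = b * x.2.2 ∨ x.2.2 = b * y.2.2)) := by
  obtain ⟨x1, x2, x3⟩ := x
  obtain ⟨y1, y2, y3⟩ := y
  simp only [hatAdj, Shat, Gset, Sbset, Aset, Abset, Set.mem_union, Set.mem_ofPred_eq, Set.mem_inv,
    Prod.fst_mul, Prod.snd_mul, Prod.fst_inv, Prod.snd_inv, mul_inv_rev, inv_inv,
    mul_inv_eq_iff_eq_mul, one_mul]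
  rw [eq_comm (a := x1) (b := y1), eq_comm (a := x2) (b := y2), eq_comm (a := x3) (b := y3)]
  tauto

lemma adj_layer {S : Set G} {b : B} {x y : G × A × B} (h : hatAdj S b x y) :
    y.2.2 = x.2.2 ∨ y.2.2 = b * x.2.2 ∨ x.2.2 = b * y.2.2 := by
  rw [hatAdj_iff] at h
  tauto

lemma adj_collinear {S : Set G} {b : B} {x y : G × A × B} (h : hatAdj S b x y) :
    y.2.1 = x.2.1 ∨ y.1 = x.1 := by
  rw [hatAdj_iff] at h
  tauto

/-- When `b` has order greater than `3`, the `B`-coordinates of a clique are confined to two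
consecutive layers, the lower of which can be taken to be that of a vertex of the clique. -/
lemma exists_two_layers {S : Set G} {b : B} (hb : 3 < orderOf b)
    {C : Set (G × A × B)} (hC : IsClique (hatAdj S b) C) (hne : C.Nonempty) :
    ∃ x ∈ C, ∀ z ∈ C, z.2.2 = x.2.2 ∨ z.2.2 = b * x.2.2 := by
  have pow_ne : ∀ m : ℕ, 0 < m → m ≤ 3 → b ^ m ≠ 1 := fun m hm hm3 h =>
    absurd (orderOf_le_of_pow_eq_one hm h) (by omega)
  have layer : ∀ x ∈ C, ∀ y ∈ C, y.2.2 = x.2.2 ∨ y.2.2 = b * x.2.2 ∨ x.2.2 = b * y.2.2 := by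
    intro x hx y hy
    by_cases h : x = y
    · exact Or.inl (by rw [h])
    · exact adj_layer (hC x hx y hy h)
  obtain ⟨c, hc⟩ := hne
  by_cases h : ∃ d ∈ C, c.2.2 = b * d.2.2
  · obtain ⟨d, hd, hcd⟩ := h
    refine ⟨d, hd, fun z hz => ?_⟩
    rcases layer c hc z hz with h1 | h1 | h1
    · exact Or.inr (h1.trans hcd)
    · exfalso
      -- here `z` would lie two layers above `d`
      have hz2 : z.2.2 = b ^ 2 * d.2.2 := by rw [h1, hcd, pow_two, mul_assoc]
      rcases layer d hd z hz with h2 | h2 | h2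
      · exact pow_ne 2 (by norm_num) (by norm_num) (by simpa using hz2.symm.trans h2)
      · have h3 := mul_right_cancel (hz2.symm.trans h2)
        exact pow_ne 1 (by norm_num) (by norm_num) (by simpa [pow_two] using h3)
      · rw [hz2, ← mul_assoc, ← pow_succ'] at h2
        exact pow_ne 3 (by norm_num) (by norm_num) (by simpa using h2.symm)
    · exact Or.inl (mul_left_cancel (h1.symm.trans hcd))
  · push Not at h
    refine ⟨c, hc, fun z hz => ?_⟩
    rcases layer c hc z hz with h1 | h1 | h1
    · exact Or.inl h1
    · exact Or.inr h1
    · exact absurd h1 (h z hz)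

/-- Pairwise collinear points of the grid `G × A` lie on a single line. -/
lemma common_coordinate {S : Set G} {b : B} {C : Set (G × A × B)}
    (hC : IsClique (hatAdj S b) C) {x : G × A × B} (hx : x ∈ C) :
    (∀ z ∈ C, z.2.1 = x.2.1) ∨ (∀ z ∈ C, z.1 = x.1) := by
  have col : ∀ x ∈ C, ∀ y ∈ C, y.2.1 = x.2.1 ∨ y.1 = x.1 := by
    intro x hx y hy
    by_cases h : x = y
    · exact Or.inl (by rw [h])
    · exact adj_collinear (hC x hx y hy h)
  by_contra! h
  obtain ⟨⟨y, hy, hy2⟩, z, hz, hz1⟩ := h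
  have hy1 := (col x hx y hy).resolve_left hy2
  have hz2 := (col x hx z hz).resolve_right hz1
  rcases col y hy z hz with h | h
  · exact hy2 (h.symm.trans hz2)
  · exact hz1 (h.trans hy1)

lemma mem_Gset_mul {x z : G × A × B} :
    z ∈ Gset G A B * {x} ↔ z.2.1 = x.2.1 ∧ z.2.2 = x.2.2 := by
  rw [Set.mul_singleton, Set.image_mul_right, Set.mem_preimage]
  simp [Gset, mul_inv_eq_one]

lemma mem_GGb_mul {b : B} {x z : G × A × B} :
    z ∈ (Gset G A B ∪ Gbset G A b) * {x} ↔
      z.2.1 = x.2.1 ∧ (z.2.2 = x.2.2 ∨ z.2.2 = b * x.2.2) := by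
  rw [Set.mul_singleton, Set.image_mul_right, Set.mem_preimage]
  simp [Gset, Gbset, mul_inv_eq_iff_eq_mul, and_or_left]

lemma mem_AAb_mul {b : B} {x z : G × A × B} :
    z ∈ (Aset G A B ∪ Abset G A b) * {x} ↔
      z.1 = x.1 ∧ (z.2.2 = x.2.2 ∨ z.2.2 = b * x.2.2) := by
  rw [Set.mul_singleton, Set.image_mul_right, Set.mem_preimage]
  simp [Aset, Abset, mul_inv_eq_iff_eq_mul, and_or_left]

lemma isClique_AAb_mul (S : Set G) (b : B) (x : G × A × B) :
    IsClique (hatAdj S b) ((Aset G A B ∪ Abset G A b) * {x}) := by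
  intro y hy z hz _
  rw [mem_AAb_mul] at hy hz
  rw [hatAdj_iff]
  refine Or.inr ⟨hz.1.trans hy.1.symm, ?_⟩
  rcases hy.2 with h | h <;> rcases hz.2 with h' | h' <;> simp [h, h']

/-- A clique with constant `A`-coordinate that contains a coset of `G` is equal to this coset:
a further vertex would be adjacent to the whole coset, forcing `S = G`. -/
lemma eq_coset_of_subset {S : Set G} (hS1 : (1 : G) ∈ S) (hSsym : S ≠ S⁻¹) {b : B}
    (hb : 2 < orderOf b) {C : Set (G × A × B)} (hC : IsClique (hatAdj S b) C)
    {a : A} (hCa : ∀ z ∈ C, z.2.1 = a) {y : G × A × B} (hy : Gset G A B * {y} ⊆ C) :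
    C = Gset G A B * {y} := by
  have hyC : y ∈ C := hy (mem_Gset_mul.2 ⟨rfl, rfl⟩)
  refine Set.Subset.antisymm (fun z hz => ?_) hy
  rw [mem_Gset_mul]
  refine ⟨(hCa z hz).trans (hCa y hyC).symm, ?_⟩
  by_contra hne
  have hb2 : ∀ k l : B, k = b * l → l ≠ b * k := by
    intro k l h h'
    rw [h, ← mul_assoc, ← pow_two] at h'
    have h2 : b ^ 2 = 1 := by simpa using h'.symm
    have := orderOf_le_of_pow_eq_one (by norm_num) h2
    omega
  have hadj : ∀ g : G, hatAdj S b (g, y.2) z := fun g =>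
    hC (g, y.2) (hy (mem_Gset_mul.2 ⟨rfl, rfl⟩)) z hz (fun h => hne (by rw [← h]))
  apply hSsym
  suffices h : S = Set.univ by rw [h, Set.inv_univ]
  refine Set.eq_univ_of_forall fun s => ?_
  rcases adj_layer (hC y hyC z hz (fun h => hne (by rw [h]))) with h | h | h
  · exact absurd h hne
  · -- `z` is above the coset; the vertex `(s⁻¹ * z.1, y.2)` differs from it by `s` in `G`
    rcases (hatAdj_iff S b _ _).1 (hadj (s⁻¹ * z.1)) with ⟨-, h' | h' | h'⟩ | ⟨h', -⟩
    · exact absurd h' hne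
    · simpa using h'.1
    · exact absurd h'.2 (hb2 _ _ h)
    · have : s = 1 := by simpa using h'
      rwa [this]
  · rcases (hatAdj_iff S b _ _).1 (hadj (s * z.1)) with ⟨-, h' | h' | h'⟩ | ⟨h', -⟩
    · exact absurd h' hne
    · exact absurd h'.2 (hb2 _ _ h)
    · simpa using h'.1
    · have : s = 1 := by simpa using h'
      rwa [this]

end CliqueLemmas

/-- For `n > 3`, every maximal clique of `X̂` is, for some `x ∈ Ĝ`: (a) a coset
`Gx`; (b) a set `Ax ∪ Abx`; or (c) a subset of `Gx ∪ Gbx` containing no coset of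
`G`. -/
theorem maximal_cliques_n_gt_3 {G A B : Type*} [Group G] [Group A] [Group B] [Finite G]
    (S : Set G) (hS1 : (1 : G) ∈ S) (hSsym : S ≠ S⁻¹)
    (n : ℕ) (hn : 3 < n) (hA : Nat.card A = n)
    (b : B) (hb : orderOf b = n) (hBgen : ∀ y : B, y ∈ Subgroup.zpowers b)
    (C : Set (G × A × B)) (hC : IsMaxClique (hatAdj S b) C) :
    ∃ x : G × A × B,
      C = Gset G A B * {x} ∨
      C = (Aset G A B ∪ Abset G A b) * {x} ∨
      (C ⊆ (Gset G A B ∪ Gbset G A b) * {x} ∧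
        ∀ y : G × A × B, ¬ (Gset G A B * {y} ⊆ C)) := by
  subst hb
  rcases C.eq_empty_or_nonempty with rfl | hne
  · exact ⟨1, Or.inr (Or.inr ⟨Set.empty_subset _, fun y h => h (mem_Gset_mul.2 ⟨rfl, rfl⟩ :
      y ∈ Gset G A B * {y})⟩)⟩
  obtain ⟨x, hx, hlay⟩ := exists_two_layers hn hC.1 hne
  rcases common_coordinate hC.1 hx with hA' | hG
  · by_cases h : ∃ y, Gset G A B * {y} ⊆ C
    · obtain ⟨y, hy⟩ := h
      exact ⟨y, Or.inl (eq_coset_of_subset hS1 hSsym (by omega) hC.1 hA' hy)⟩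
    · push Not at h
      exact ⟨x, Or.inr (Or.inr ⟨fun z hz => mem_GGb_mul.2 ⟨hA' z hz, hlay z hz⟩, h⟩)⟩
  · exact ⟨x, Or.inr (Or.inl (hC.2 _ (isClique_AAb_mul S b x)
      fun z hz => mem_AAb_mul.2 ⟨hG z hz, hlay z hz⟩).symm)⟩
end

section
/- With the construction in the context (in particular 1_G ∈ S and S ≠ S⁻¹), for every x ∈ Ĝ the coset Gx is a maximal clique of the graph X̂. -/
/-!
Suppose a clique contains `Gx` and a vertex `y ∉ Gx`, and write `(a, c) ≠ (1, 1)` for the `A × B`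
component of `y * x⁻¹`. As `y` is adjacent to every vertex of `Gx`, all elements `(h, a, c)` with
`h : G` lie in `Ŝ ∪ Ŝ⁻¹`. Since `S ≠ S⁻¹`, some `s ∈ S` has `s⁻¹ ∉ S`, and `s ≠ 1` because `1 ∈ S`.
For `h = s, s⁻¹` the element `(h, a, c)` is outside `G`, `A`, `Ab` and `(Ab)⁻¹`, so it lies in
`Sb ∪ (Sb)⁻¹`; as `s⁻¹ ∉ S`, this forces `c = b` for `h = s` and `c = b⁻¹` for `h = s⁻¹`. Hence
`b = b⁻¹`, which contradicts `orderOf b = n ≥ 3`.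
-/

open scoped Pointwise

theorem exists_mem_inv_notMem {G : Type*} [Group G] {S : Set G} (hS : S ≠ S⁻¹) :
    ∃ s ∈ S, s⁻¹ ∉ S := by
  by_contra! h
  refine hS (Set.ext fun s => ⟨fun hs => h s hs, fun hs => ?_⟩)
  simpa using h _ (Set.mem_inv.1 hs)

theorem ne_inv_of_three_le_orderOf {B : Type*} [Group B] {b : B} (h : 3 ≤ orderOf b) :
    b ≠ b⁻¹ := by
  intro hb
  have h2 : b ^ 2 = 1 := by rw [pow_two, ← eq_inv_iff_mul_eq_one]; exact hb
  have := orderOf_le_of_pow_eq_one (by norm_num) h2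
  omega

/-- Membership in `Gx` only depends on the `A × B` component. -/
theorem mem_Gset_mul_singleton {G A B : Type*} [Group G] [Group A] [Group B]
    (x y : G × A × B) : y ∈ Gset G A B * {x} ↔ y.2 = x.2 := by
  simp only [Set.mul_singleton, Set.mem_image, Gset, Set.mem_ofPred_eq]
  constructor
  · rintro ⟨z, ⟨h1, h2⟩, rfl⟩
    ext <;> simp [h1, h2]
  · intro h
    refine ⟨y * x⁻¹, ?_, by simp⟩
    simp [h]

/-- A connection element outside `G` whose `G`-component is not `1` lies in `Sb ∪ (Sb)⁻¹`. -/
theorem mem_Shat_cases {G A B : Type*} [Group G] [Group A] [Group B] {S : Set G} {b : B}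
    {h : G} {w : A × B} (hh : h ≠ 1) (hw : w ≠ 1)
    (hm : ((h, w) : G × A × B) ∈ Shat S b ∪ (Shat S b)⁻¹) :
    (h ∈ S ∧ w.2 = b) ∨ (h⁻¹ ∈ S ∧ w.2 = b⁻¹) := by
  obtain ⟨a, c⟩ := w
  simp only [Shat, Gset, Sbset, Aset, Abset, Set.mem_union, Set.mem_inv, Set.mem_ofPred_eq,
    Prod.inv_mk, inv_eq_one, hh, false_and, or_false] at hm
  simp only [ne_eq, Prod.mk_eq_one] at hw
  rcases hm with (h1 | ⟨h1, -, h2⟩) | (h1 | ⟨h1, -, h2⟩)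
  · exact absurd h1 hw
  · exact Or.inl ⟨h1, h2⟩
  · exact absurd h1 hw
  · exact Or.inr ⟨h1, inv_eq_iff_eq_inv.1 h2⟩

/-- Every coset `Gx` is a maximal clique of `X̂`. -/
theorem Gcoset_is_maximal_clique {G A B : Type*} [Group G] [Group A] [Group B] [Finite G]
    (S : Set G) (hS1 : (1 : G) ∈ S) (hSsym : S ≠ S⁻¹)
    (n : ℕ) (hn : 3 ≤ n) (hA : Nat.card A = n)
    (b : B) (hb : orderOf b = n) (hBgen : ∀ y : B, y ∈ Subgroup.zpowers b)
    (x : G × A × B) :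
    IsMaxClique (hatAdj S b) (Gset G A B * {x}) := by
  refine ⟨fun u hu v hv _ => ?_, fun D hD hsub => Set.Subset.antisymm (fun y hy => ?_) hsub⟩
  · rw [mem_Gset_mul_singleton] at hu hv
    refine Or.inl (Or.inl (Or.inl (Or.inl ?_)))
    simp [Gset, hu, hv]
  · by_contra hyx
    rw [mem_Gset_mul_singleton] at hyx
    have hw : y.2 * x.2⁻¹ ≠ 1 := fun h => hyx (mul_inv_eq_one.1 h)
    -- The vertex `(h⁻¹ * y.1, x.2)` of `Gx` is the one whose quotient with `y` has
    -- `G`-component `h`.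
    have key (h : G) : ((h, y.2 * x.2⁻¹) : G × A × B) ∈ Shat S b ∪ (Shat S b)⁻¹ := by
      have hz : ((h⁻¹ * y.1, x.2) : G × A × B) ∈ D :=
        hsub ((mem_Gset_mul_singleton _ _).2 rfl)
      have hadj := hD _ hz y hy fun e => hyx (congrArg Prod.snd e).symm
      have he : y * ((h⁻¹ * y.1, x.2) : G × A × B)⁻¹ = (h, y.2 * x.2⁻¹) :=
        Prod.ext (by simp) rfl
      rwa [hatAdj, he] at hadj
    obtain ⟨s, hs, hs'⟩ := exists_mem_inv_notMem hSsym
    have hs1 : s ≠ 1 := by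
      rintro rfl
      exact hs' (by simpa using hS1)
    rcases mem_Shat_cases hs1 hw (key s) with ⟨-, h1⟩ | ⟨h1, -⟩
    · rcases mem_Shat_cases (inv_ne_one.2 hs1) hw (key s⁻¹) with ⟨h2, -⟩ | ⟨-, h2⟩
      · exact hs' h2
      · exact ne_inv_of_three_le_orderOf (hb ▸ hn) (h1.symm.trans h2)
    · exact hs' h1
end

section
/- With the construction in the context (in particular 1_G ∈ S and S ≠ S⁻¹), assume n = 3. Then for every x ∈ Ĝ the coset ABx is a maximal clique of the graph X̂. -/
/-!
The coset `ABx` is the set of vertices whose `G`-coordinate is that of `x`. It is a clique because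
`B = {1, b, b⁻¹}` when `n = 3`, so that `AB = A ∪ Ab ∪ (Ab)⁻¹` lies in `Ŝ ∪ Ŝ⁻¹`
(`eq_one_or_self_or_inv`). It is maximal because every element of `Ŝ ∪ Ŝ⁻¹` with trivial
`B`-coordinate lies in `G ∪ A` (`not_hatAdj`): a vertex `y` outside `ABx` is therefore not adjacent
to the vertices of `ABx` that share its `B`-coordinate but not its `A`-coordinate.
-/

open scoped Pointwise

theorem eq_one_or_self_or_inv {B : Type*} [Group B] {b : B} (hb : orderOf b = 3)
    (hBgen : ∀ y : B, y ∈ Subgroup.zpowers b) (c : B) : c = 1 ∨ c = b ∨ c = b⁻¹ := by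
  obtain ⟨k, rfl⟩ := Subgroup.mem_zpowers_iff.mp (hBgen c)
  have h3 (m r : ℤ) (h : m % 3 = r % 3) : b ^ m = b ^ r := by
    rw [← zpow_mod_orderOf b m, ← zpow_mod_orderOf b r, hb]
    exact congrArg (b ^ ·) h
  have hk : k % 3 = 0 % 3 ∨ k % 3 = 1 % 3 ∨ k % 3 = (-1) % 3 := by omega
  rcases hk with h | h | h
  · exact Or.inl (by simpa using h3 _ _ h)
  · exact Or.inr (Or.inl (by simpa using h3 _ _ h))
  · exact Or.inr (Or.inr (by simpa using h3 _ _ h))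

theorem not_hatAdj {G A B : Type*} [Group G] [Group A] [Group B] {S : Set G} {b : B}
    (hb1 : b ≠ 1) {y z : G × A × B} (h1 : y.1 ≠ z.1) (h2 : y.2.1 ≠ z.2.1)
    (h3 : y.2.2 = z.2.2) : ¬ hatAdj S b y z := by
  have key (w : G × A × B) (hw1 : w.1 ≠ 1) (hw2 : w.2.1 ≠ 1) (hw3 : w.2.2 = 1) :
      w ∉ Shat S b := by
    rintro (((h | h) | h) | h)
    · exact hw2 h.1
    · exact hb1 (h.2.2.symm.trans hw3)
    · exact hw1 h.1
    · exact hw1 h.1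
  rintro (h | h)
  · refine key _ ?_ ?_ ?_ h <;> simp [mul_inv_eq_one, h1.symm, h2.symm, h3]
  · refine key _ ?_ ?_ ?_ (Set.mem_inv.mp h) <;> simp [mul_inv_eq_one, h1, h2, h3]

/-- For `n = 3`, every coset `ABx` is a maximal clique of `X̂`. -/
theorem ABcoset_is_maximal_clique {G A B : Type*} [Group G] [Group A] [Group B] [Finite G]
    (S : Set G) (hS1 : (1 : G) ∈ S) (hSsym : S ≠ S⁻¹)
    (hA : Nat.card A = 3)
    (b : B) (hb : orderOf b = 3) (hBgen : ∀ y : B, y ∈ Subgroup.zpowers b)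
    (x : G × A × B) :
    IsMaxClique (hatAdj S b) (ABset G A B * {x}) := by
  have mem (z : G × A × B) : z ∈ ABset G A B * {x} ↔ z.1 = x.1 := by
    simp [ABset, mul_inv_eq_one]
  have : Finite A := Nat.finite_of_card_ne_zero (by omega)
  have : Nontrivial A := Finite.one_lt_card_iff_nontrivial.mp (by omega)
  refine ⟨?_, fun D hD hCD => Set.Subset.antisymm (fun y hy => ?_) hCD⟩
  · intro y hy z hz _
    rw [mem] at hy hz
    have h1 : (z * y⁻¹).1 = 1 := by simp [hy, hz]
    rcases eq_one_or_self_or_inv hb hBgen (z * y⁻¹).2.2 with h | h | h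
    · exact Or.inl (Or.inl (Or.inr ⟨h1, h⟩))
    · exact Or.inl (Or.inr ⟨h1, h⟩)
    · refine Or.inr (Or.inr ⟨?_, ?_⟩)
      · rw [Prod.fst_inv, h1, inv_one]
      · rw [Prod.snd_inv, Prod.snd_inv, h, inv_inv]
  · rw [mem]
    by_contra hne
    -- The vertex of the coset at the same `B`-level as `y` but with another `A`-coordinate.
    obtain ⟨a, ha⟩ := exists_ne y.2.1
    have hzD : (x.1, a, y.2.2) ∈ D := hCD ((mem _).mpr rfl)
    have hb1 : b ≠ 1 := by
      rintro rfl
      simp at hb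
    exact not_hatAdj (z := (x.1, a, y.2.2)) hb1 hne ha.symm rfl
      (hD _ hy _ hzD fun h => ha (congrArg (fun z => z.2.1) h).symm)
end
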